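/- Assume (H1)–(H4). Let y be a solution of (E) belonging to the class S₁ = {y > 0, L₁y < 0, L₂y < 0, L₃y < 0} on [t₁, ∞) for some t₁ ≥ t₀, and suppose ∫_{t₀}^∞ q(s)·π(σ(s))^γ ds = ∞. Then there exists t₂ ≥ t₁ such that the function t ↦ y(t)/π₁(t) is nondecreasing on [t₂, ∞); in particular, y(t) ≥ −(L₁y(t))^{1/α}·π₁(t) eventually. -/

import Mathlib

open Filter MeasureTheory Set

/-- Signed power: for exponents that are quotients of odd positive integers,
`x ^ p` preserves the sign of `x`. -/
noncomputable def opow (x p : ℝ) : ℝ := Real.sign x * |x| ^ p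

/-- `L₁y = r₁ · (y')^α`. -/
noncomputable def L1 (r₁ : ℝ → ℝ) (α : ℝ) (y : ℝ → ℝ) : ℝ → ℝ :=
  fun t => r₁ t * opow (deriv y t) α

/-- `L₂y = r₂ · ((L₁y)')^β`. -/
noncomputable def L2 (r₁ r₂ : ℝ → ℝ) (α β : ℝ) (y : ℝ → ℝ) : ℝ → ℝ :=
  fun t => r₂ t * opow (deriv (L1 r₁ α y) t) β

/-- `L₃y = (L₂y)'`. -/
noncomputable def L3 (r₁ r₂ : ℝ → ℝ) (α β : ℝ) (y : ℝ → ℝ) : ℝ → ℝ :=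
  deriv (L2 r₁ r₂ α β y)

/-- A real number which is a quotient of odd positive integers. -/
def OddQuotient (x : ℝ) : Prop :=
  ∃ m n : ℕ, Odd m ∧ Odd n ∧ 0 < m ∧ 0 < n ∧ x = (m : ℝ) / (n : ℝ)

/-- The standing hypotheses (H1)–(H4). -/
structure Hyp (t₀ α β γ : ℝ) (r₁ r₂ q σ : ℝ → ℝ) : Prop where
  ht₀ : 0 < t₀
  hα : OddQuotient α
  hβ : OddQuotient β
  hγ : OddQuotient γ
  hr₁c : ContinuousOn r₁ (Set.Ici t₀)
  hr₂c : ContinuousOn r₂ (Set.Ici t₀)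
  hr₁p : ∀ t, t₀ ≤ t → 0 < r₁ t
  hr₂p : ∀ t, t₀ ≤ t → 0 < r₂ t
  /-- noncanonical: `π₁(t₀) = ∫_{t₀}^∞ r₁^{-1/α} < ∞` -/
  hπ₁fin : IntegrableOn (fun s => r₁ s ^ (-(1/α))) (Set.Ici t₀)
  /-- noncanonical: `π₂(t₀) = ∫_{t₀}^∞ r₂^{-1/β} < ∞` -/
  hπ₂fin : IntegrableOn (fun s => r₂ s ^ (-(1/β))) (Set.Ici t₀)
  hqc : ContinuousOn q (Set.Ici t₀)
  hq0 : ∀ t, t₀ ≤ t → 0 ≤ q t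
  /-- `q` does not vanish eventually -/
  hqnv : ∀ T, t₀ ≤ T → ∃ t, T ≤ t ∧ q t ≠ 0
  hσd : DifferentiableOn ℝ σ (Set.Ici t₀)
  hσd' : ContinuousOn (deriv σ) (Set.Ici t₀)
  hσpos : ∀ t, t₀ ≤ t → 0 < σ t
  hσadv : ∀ t, t₀ ≤ t → t ≤ σ t
  hσmono : ∀ t, t₀ ≤ t → 0 ≤ deriv σ t

/-- `y` is a (nontrivial) solution of equation (E) on some half-line `[T,∞) ⊆ [t₀,∞)`. -/
def IsSolution (t₀ α β γ : ℝ) (r₁ r₂ q σ y : ℝ → ℝ) : Prop :=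
  ∃ T, t₀ ≤ T ∧
    ContinuousOn y (Set.Ici T) ∧
    DifferentiableOn ℝ y (Set.Ici T) ∧
    ContinuousOn (L1 r₁ α y) (Set.Ici T) ∧
    DifferentiableOn ℝ (L1 r₁ α y) (Set.Ici T) ∧
    ContinuousOn (L2 r₁ r₂ α β y) (Set.Ici T) ∧
    DifferentiableOn ℝ (L2 r₁ r₂ α β y) (Set.Ici T) ∧
    (∀ t, T ≤ t → L3 r₁ r₂ α β y t + q t * opow (y (σ t)) γ = 0) ∧
    (∀ T', T ≤ T' → ∃ t, T' ≤ t ∧ y t ≠ 0)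

/-- A function is oscillatory if it has arbitrarily large zeros. -/
def Oscillatory (y : ℝ → ℝ) : Prop := ∀ T : ℝ, ∃ t, T ≤ t ∧ y t = 0

/-- Equation (E) has property A: every solution is oscillatory or tends to `0`. -/
def PropertyA (t₀ α β γ : ℝ) (r₁ r₂ q σ : ℝ → ℝ) : Prop :=
  ∀ y : ℝ → ℝ, IsSolution t₀ α β γ r₁ r₂ q σ y →
    Oscillatory y ∨ Filter.Tendsto y Filter.atTop (nhds 0)

/-- Equation (E) is oscillatory: every solution is oscillatory. -/
def OscillatoryEq (t₀ α β γ : ℝ) (r₁ r₂ q σ : ℝ → ℝ) : Prop :=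
  ∀ y : ℝ → ℝ, IsSolution t₀ α β γ r₁ r₂ q σ y → Oscillatory y

/-- `π₁(t) = ∫_t^∞ r₁(s)^{-1/α} ds`. -/
noncomputable def pi1 (r₁ : ℝ → ℝ) (α : ℝ) (t : ℝ) : ℝ :=
  ∫ s in Set.Ioi t, r₁ s ^ (-(1/α))

/-- `π₂(t) = ∫_t^∞ r₂(s)^{-1/β} ds`. -/
noncomputable def pi2 (r₂ : ℝ → ℝ) (β : ℝ) (t : ℝ) : ℝ :=
  ∫ s in Set.Ioi t, r₂ s ^ (-(1/β))

/-- `π(t) = ∫_t^∞ r₁(s)^{-1/α} · π₂(s)^{1/α} ds`. -/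
noncomputable def piInf (r₁ r₂ : ℝ → ℝ) (α β : ℝ) (t : ℝ) : ℝ :=
  ∫ s in Set.Ioi t, r₁ s ^ (-(1/α)) * (pi2 r₂ β s) ^ (1/α)

/-- The class `S₁`: `y > 0, L₁y < 0, L₂y < 0, L₃y < 0` on `[t₁,∞)`. -/
def InS1 (r₁ r₂ : ℝ → ℝ) (α β : ℝ) (y : ℝ → ℝ) (t₁ : ℝ) : Prop :=
  ∀ t, t₁ ≤ t → 0 < y t ∧ L1 r₁ α y t < 0 ∧ L2 r₁ r₂ α β y t < 0 ∧ L3 r₁ r₂ α β y t < 0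

/-- The class `S₂`: `y > 0, L₁y < 0, L₂y > 0, L₃y < 0` on `[t₁,∞)`. -/
def InS2 (r₁ r₂ : ℝ → ℝ) (α β : ℝ) (y : ℝ → ℝ) (t₁ : ℝ) : Prop :=
  ∀ t, t₁ ≤ t → 0 < y t ∧ L1 r₁ α y t < 0 ∧ 0 < L2 r₁ r₂ α β y t ∧ L3 r₁ r₂ α β y t < 0

/-- The class `S₃`: `y > 0, L₁y > 0, L₂y > 0, L₃y < 0` on `[t₁,∞)`. -/
def InS3 (r₁ r₂ : ℝ → ℝ) (α β : ℝ) (y : ℝ → ℝ) (t₁ : ℝ) : Prop :=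
  ∀ t, t₁ ≤ t → 0 < y t ∧ 0 < L1 r₁ α y t ∧ 0 < L2 r₁ r₂ α β y t ∧ L3 r₁ r₂ α β y t < 0

/-- The class `S₄`: `y > 0, L₁y > 0, L₂y < 0, L₃y < 0` on `[t₁,∞)`. -/
def InS4 (r₁ r₂ : ℝ → ℝ) (α β : ℝ) (y : ℝ → ℝ) (t₁ : ℝ) : Prop :=
  ∀ t, t₁ ≤ t → 0 < y t ∧ 0 < L1 r₁ α y t ∧ L2 r₁ r₂ α β y t < 0 ∧ L3 r₁ r₂ α β y t < 0

/-! Regard `y` as a function of `x = π₁(t)`, which decreases to `0` as `t → ∞`. Then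
`dy/dx = -(L₁y)^{1/α}`, and since `L₁y` decreases in `t`, this slope is nonincreasing in `x`: `y` is
a concave function of `x` which is nonnegative near `x = 0`. Such a function satisfies
`x · dy/dx ≤ y`, so `y / x` is nonincreasing in `x`, that is, nondecreasing in `t`. -/

section SignedPower

variable {p r x : ℝ}

theorem opow_of_pos (hx : 0 < x) : opow x p = x ^ p := by
  rw [opow, Real.sign_of_pos hx, abs_of_pos hx, one_mul]

theorem zero_opow : opow 0 p = 0 := by
  rw [opow, Real.sign_zero, zero_mul]

theorem neg_opow : opow (-x) p = -opow x p := by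
  rw [opow, opow, Real.sign_neg, abs_neg, neg_mul]

theorem opow_of_neg (hx : x < 0) : opow x p = -(-x) ^ p := by
  rw [← opow_of_pos (neg_pos.mpr hx), neg_opow, neg_neg]

theorem opow_lt_zero_iff : opow x p < 0 ↔ x < 0 := by
  rcases lt_trichotomy x 0 with hx | rfl | hx
  · simpa only [opow_of_neg hx, neg_lt_zero, hx, iff_true] using
      Real.rpow_pos_of_pos (neg_pos.mpr hx) p
  · rw [zero_opow]
  · simpa only [opow_of_pos hx, hx.not_gt, iff_false, not_lt] using Real.rpow_nonneg hx.le p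

theorem opow_one : opow x 1 = x := by
  rcases lt_trichotomy x 0 with hx | rfl | hx
  · rw [opow_of_neg hx, Real.rpow_one, neg_neg]
  · exact zero_opow
  · rw [opow_of_pos hx, Real.rpow_one]

theorem opow_opow (x p q : ℝ) : opow (opow x p) q = opow x (p * q) := by
  have of_pos {z : ℝ} (hz : 0 < z) : opow (opow z p) q = opow z (p * q) := by
    rw [opow_of_pos hz, opow_of_pos (Real.rpow_pos_of_pos hz p), opow_of_pos hz,
      Real.rpow_mul hz.le]
  rcases lt_trichotomy x 0 with hx | rfl | hx
  · simpa only [neg_opow, neg_inj] using of_pos (neg_pos.mpr hx)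
  · simp only [zero_opow]
  · exact of_pos hx

theorem mul_opow_of_pos (hr : 0 < r) : opow (r * x) p = r ^ p * opow x p := by
  have of_pos {z : ℝ} (hz : 0 < z) : opow (r * z) p = r ^ p * opow z p := by
    rw [opow_of_pos (mul_pos hr hz), opow_of_pos hz, Real.mul_rpow hr.le hz.le]
  rcases lt_trichotomy x 0 with hx | rfl | hx
  · simpa only [mul_neg, neg_opow, neg_inj] using of_pos (neg_pos.mpr hx)
  · simp only [mul_zero, zero_opow]
  · exact of_pos hx

theorem monotone_opow (hp : 0 ≤ p) : Monotone (opow · p) := by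
  intro x z hxz
  rcases lt_or_ge (opow z p) 0 with hz | hz
  · have hz' := opow_lt_zero_iff.mp hz
    simp only [opow_of_neg hz', opow_of_neg (hxz.trans_lt hz')]
    gcongr
    linarith
  · rcases le_or_gt x 0 with hx | hx
    · refine le_trans ?_ hz
      rcases hx.lt_or_eq with hx | rfl
      · exact (opow_lt_zero_iff.mpr hx).le
      · exact zero_opow.le
    · simp only [opow_of_pos hx, opow_of_pos (hx.trans_le hxz)]
      gcongr

end SignedPower

theorem OddQuotient.pos {x : ℝ} (hx : OddQuotient x) : 0 < x := by
  obtain ⟨m, n, -, -, hm, hn, rfl⟩ := hx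
  positivity

section TailIntegral

variable {f : ℝ → ℝ} {a t : ℝ}

theorem hasDerivAt_integral_Ioi (hf : IntegrableOn f (Ioi a)) (hat : a < t)
    (hft : ContinuousAt f t) : HasDerivAt (fun u => ∫ s in Ioi u, f s) (-f t) t := by
  have hprim : HasDerivAt (fun u => ∫ s in a..u, f s) (f t) t := by
    refine intervalIntegral.integral_hasDerivAt_right ?_
      ⟨Ioi a, Ioi_mem_nhds hat, hf.aestronglyMeasurable⟩ hft
    exact (intervalIntegrable_iff_integrableOn_Ioc_of_le hat.le).mpr
      (hf.mono_set Ioc_subset_Ioi_self)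
  refine (hprim.const_sub (∫ s in Ioi a, f s)).congr_of_eventuallyEq ?_
  filter_upwards [Ioi_mem_nhds hat] with u hu
  rw [← intervalIntegral.integral_Ioi_sub_Ioi hf (le_of_lt hu), sub_sub_cancel]

theorem integral_Ioi_pos (hf : IntegrableOn f (Ioi a)) (hpos : ∀ s ∈ Ioi a, 0 < f s) :
    0 < ∫ s in Ioi a, f s := by
  rw [setIntegral_pos_iff_support_of_nonneg_ae
    (ae_restrict_of_forall_mem measurableSet_Ioi fun s hs => (hpos s hs).le) hf,
    inter_eq_right.mpr fun s hs => Function.mem_support.mpr (hpos s hs).ne', Real.volume_Ioi]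
  exact ENNReal.zero_lt_top

end TailIntegral

section RelativeSlope

variable {a : ℝ} {y y' p p' c : ℝ → ℝ}

theorem mul_le_of_hasDerivAt_le_mul {k : ℝ}
    (hyc : ContinuousOn y (Ici a)) (hpc : ContinuousOn p (Ici a))
    (hy : ∀ t ∈ Ioi a, HasDerivAt y (y' t) t) (hp : ∀ t ∈ Ioi a, HasDerivAt p (p' t) t)
    (hslope : ∀ t ∈ Ioi a, y' t ≤ k * p' t)
    (hp_lim : Tendsto p atTop (nhds 0)) (hy_nonneg : ∀ᶠ t in atTop, 0 ≤ y t) :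
    k * p a ≤ y a := by
  have hanti : AntitoneOn (fun t => y t - k * p t) (Ici a) := by
    refine antitoneOn_of_hasDerivWithinAt_nonpos (f' := fun t => y' t - k * p' t) (convex_Ici a)
      (hyc.sub (hpc.const_mul k)) ?_ ?_ <;> rw [interior_Ici]
    · exact fun t ht => ((hy t ht).sub ((hp t ht).const_mul k)).hasDerivWithinAt
    · exact fun t ht => sub_nonpos.mpr (hslope t ht)
  have hlim : Tendsto (fun t => -(k * p t)) atTop (nhds 0) := by
    simpa only [mul_zero, neg_zero] using (hp_lim.const_mul k).neg
  have hnonneg : 0 ≤ y a - k * p a := by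
    refine le_of_tendsto hlim ?_
    filter_upwards [hy_nonneg, eventually_ge_atTop a] with t hyt hat
    have := hanti self_mem_Ici hat hat
    dsimp only at this
    linarith
  exact sub_nonneg.mp hnonneg

theorem monotoneOn_div_of_hasDerivAt_mul
    (hyc : ContinuousOn y (Ici a)) (hpc : ContinuousOn p (Ici a)) (hp_pos : ∀ t ∈ Ici a, 0 < p t)
    (hy : ∀ t ∈ Ioi a, HasDerivAt y (c t * p' t) t) (hp : ∀ t ∈ Ioi a, HasDerivAt p (p' t) t)
    (hp' : ∀ t ∈ Ioi a, p' t ≤ 0) (hle : ∀ t ∈ Ioi a, c t * p t ≤ y t) :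
    MonotoneOn (fun t => y t / p t) (Ici a) := by
  refine monotoneOn_of_hasDerivWithinAt_nonneg
    (f' := fun t => (c t * p' t * p t - y t * p' t) / p t ^ 2) (convex_Ici a)
    (hyc.div hpc fun t ht => (hp_pos t ht).ne') ?_ ?_ <;> rw [interior_Ici]
  · exact fun t ht =>
      ((hy t ht).div (hp t ht) (hp_pos t (Ioi_subset_Ici_self ht)).ne').hasDerivWithinAt
  · intro t ht
    have hnum : c t * p' t * p t - y t * p' t = -p' t * (y t - c t * p t) := by ring
    rw [hnum]
    exact div_nonneg
      (mul_nonneg (neg_nonneg.mpr (hp' t ht)) (sub_nonneg.mpr (hle t ht))) (sq_nonneg _)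

end RelativeSlope

section QuasiDerivative

variable {α β t t₁ : ℝ} {r₁ r₂ y : ℝ → ℝ}

theorem pi1_pos (hr : ∀ s, t < s → 0 < r₁ s)
    (hint : IntegrableOn (fun s => r₁ s ^ (-(1 / α))) (Ioi t)) : 0 < pi1 r₁ α t :=
  integral_Ioi_pos hint fun s hs => Real.rpow_pos_of_pos (hr s hs) _

theorem hasDerivAt_pi1 (hint : IntegrableOn (fun s => r₁ s ^ (-(1 / α))) (Ioi t₁)) (ht : t₁ < t)
    (hr : r₁ t ≠ 0) (hrc : ContinuousAt r₁ t) :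
    HasDerivAt (pi1 r₁ α) (-r₁ t ^ (-(1 / α))) t :=
  hasDerivAt_integral_Ioi hint ht (hrc.rpow_const (.inl hr))

theorem deriv_eq_rpow_mul_opow_L1 (hα : α ≠ 0) (hr : 0 < r₁ t) :
    deriv y t = r₁ t ^ (-(1 / α)) * opow (L1 r₁ α y t) (1 / α) := by
  rw [L1, mul_opow_of_pos hr, opow_opow, mul_one_div_cancel hα, opow_one, ← mul_assoc,
    ← Real.rpow_add hr, neg_add_cancel, Real.rpow_zero, one_mul]

theorem InS1.differentiableAt (h : InS1 r₁ r₂ α β y t₁) (ht : t₁ ≤ t) : DifferentiableAt ℝ y t := by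
  refine differentiableAt_of_deriv_ne_zero fun hzero => (h t ht).2.1.ne ?_
  rw [L1, hzero, zero_opow, mul_zero]

theorem InS1.antitoneOn_L1 (h : InS1 r₁ r₂ α β y t₁) (hr₂ : ∀ t, t₁ ≤ t → 0 < r₂ t) :
    AntitoneOn (L1 r₁ α y) (Ici t₁) := by
  have hneg : ∀ t ∈ Ici t₁, deriv (L1 r₁ α y) t < 0 := fun t ht =>
    opow_lt_zero_iff.mp (neg_of_mul_neg_right (h t ht).2.2.1 (hr₂ t ht).le)
  refine (strictAntiOn_of_deriv_neg (convex_Ici t₁) (fun t ht => ?_) fun t ht =>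
    hneg t (interior_subset ht)).antitoneOn
  exact (differentiableAt_of_deriv_ne_zero (hneg t ht).ne).continuousAt.continuousWithinAt

end QuasiDerivative

theorem S1_ratio_increasing_general {α t₁ : ℝ} {r₁ y : ℝ → ℝ} (hα : 0 < α)
    (hr₁c : ContinuousOn r₁ (Ici t₁)) (hr₁p : ∀ t, t₁ ≤ t → 0 < r₁ t)
    (hπ₁ : IntegrableOn (fun s => r₁ s ^ (-(1 / α))) (Ici t₁))
    (hy : ∀ t, t₁ ≤ t → DifferentiableAt ℝ y t) (hy_nonneg : ∀ᶠ t in atTop, 0 ≤ y t)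
    (hL : AntitoneOn (L1 r₁ α y) (Ici t₁)) :
    MonotoneOn (fun t => y t / pi1 r₁ α t) (Ici t₁) ∧
      ∀ t, t₁ ≤ t → -(opow (L1 r₁ α y t) (1 / α)) * pi1 r₁ α t ≤ y t := by
  set c : ℝ → ℝ := fun t => -opow (L1 r₁ α y t) (1 / α)
  have hc : MonotoneOn c (Ici t₁) :=
    ((monotone_opow (one_div_nonneg.mpr hα.le)).comp_antitoneOn hL).neg
  have hπ_int := hπ₁.mono_set Ioi_subset_Ici_self
  have hπ_pos : ∀ t, t₁ ≤ t → 0 < pi1 r₁ α t := fun t ht =>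
    pi1_pos (fun s hs => hr₁p s (ht.trans hs.le)) (hπ_int.mono_set (Ioi_subset_Ioi ht))
  have hπ_cont : ContinuousOn (pi1 r₁ α) (Ici t₁) := hπ_int.continuousOn_Ici_primitive_Ioi
  have hπ_deriv : ∀ t, t₁ < t → HasDerivAt (pi1 r₁ α) (-r₁ t ^ (-(1 / α))) t := fun t ht =>
    hasDerivAt_pi1 hπ_int ht (hr₁p t ht.le).ne' (hr₁c.continuousAt (Ici_mem_nhds ht))
  have hπ_deriv_nonpos : ∀ t, t₁ < t → -r₁ t ^ (-(1 / α)) ≤ 0 := fun t ht =>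
    neg_nonpos.mpr (Real.rpow_nonneg (hr₁p t ht.le).le _)
  have hy_cont : ContinuousOn y (Ici t₁) := fun t ht => (hy t ht).continuousAt.continuousWithinAt
  have hy_deriv : ∀ t, t₁ < t → HasDerivAt y (c t * -r₁ t ^ (-(1 / α))) t := fun t ht => by
    rw [neg_mul_neg, mul_comm, ← deriv_eq_rpow_mul_opow_L1 hα.ne' (hr₁p t ht.le)]
    exact (hy t ht.le).hasDerivAt
  have hle : ∀ t, t₁ ≤ t → c t * pi1 r₁ α t ≤ y t := fun t ht =>
    mul_le_of_hasDerivAt_le_mul (hy_cont.mono (Ici_subset_Ici.mpr ht))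
      (hπ_cont.mono (Ici_subset_Ici.mpr ht)) (fun s hs => hy_deriv s (ht.trans_lt hs))
      (fun s hs => hπ_deriv s (ht.trans_lt hs))
      (fun s hs => mul_le_mul_of_nonpos_right (hc ht (ht.trans hs.le) hs.le)
        (hπ_deriv_nonpos s (ht.trans_lt hs)))
      (tendsto_integral_Ioi_zero tendsto_id) hy_nonneg
  exact ⟨monotoneOn_div_of_hasDerivAt_mul hy_cont hπ_cont hπ_pos hy_deriv hπ_deriv
    hπ_deriv_nonpos fun t ht => hle t ht.le, hle⟩

theorem S1_ratio_increasing (t₀ α β γ t₁ : ℝ) (r₁ r₂ q σ y : ℝ → ℝ)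
    (H : Hyp t₀ α β γ r₁ r₂ q σ)
    (hy : IsSolution t₀ α β γ r₁ r₂ q σ y)
    (ht₁ : t₀ ≤ t₁)
    (hS1 : InS1 r₁ r₂ α β y t₁)
    (hdiv : Filter.Tendsto (fun t => ∫ s in t₀..t, q s * (piInf r₁ r₂ α β (σ s)) ^ γ)
      Filter.atTop Filter.atTop) :
    ∃ t₂, t₁ ≤ t₂ ∧ MonotoneOn (fun t => y t / pi1 r₁ α t) (Set.Ici t₂) ∧
      ∀ t, t₂ ≤ t → -(opow (L1 r₁ α y t) (1/α)) * pi1 r₁ α t ≤ y t :=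
  ⟨t₁, le_rfl, S1_ratio_increasing_general H.hα.pos (H.hr₁c.mono (Ici_subset_Ici.mpr ht₁))
    (fun t ht => H.hr₁p t (ht₁.trans ht)) (H.hπ₁fin.mono_set (Ici_subset_Ici.mpr ht₁))
    (fun _ => hS1.differentiableAt)
    ((eventually_ge_atTop t₁).mono fun t ht => (hS1 t ht).1.le)
    (hS1.antitoneOn_L1 fun t ht => H.hr₂p t (ht₁.trans ht))⟩
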